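/- Let (q_υ)_{υ∈ℝ^I} be a nice distribution of polynomials on ℝ^n, let R̄ ≥ √3, and set R₀ = R̄^{1/4}/13. Let g be the polynomial g(x) = E_υ[q_υ(x)²]. Then HyperVar_{R₀}[g] ≤ 8·( E_υ[‖q_υ‖₂²] + E_υ[HyperVar_{R̄}[q_υ]] )·E_υ[HyperVar_{R̄}[q_υ]]. -/

import Mathlib

open MeasureTheory ProbabilityTheory MvPolynomial

/-- The standard Gaussian measure `N(0,1)^n` on `ℝ^n`. -/
noncomputable def gaussianN (n : ℕ) : Measure (Fin n → ℝ) :=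
  Measure.pi fun _ => gaussianReal 0 1

/-- The normalized probabilists' Hermite polynomial `h_k = H_k / √(k!)`. -/
noncomputable def hermiteFn (k : ℕ) (t : ℝ) : ℝ :=
  ((Polynomial.hermite k).map (Int.castRingHom ℝ)).eval t / Real.sqrt (Nat.factorial k)

/-- The multivariate Hermite polynomial `h_α(x) = ∏ i, h_{α i}(x i)`. -/
noncomputable def hermiteMv {n : ℕ} (α : Fin n → ℕ) (x : Fin n → ℝ) : ℝ :=
  ∏ i, hermiteFn (α i) (x i)

/-- Hermite coefficient `f̂(α) = E_{x ∼ N(0,1)^n}[f(x)·h_α(x)]` of a function. -/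
noncomputable def hermiteCoeffF {n : ℕ} (f : (Fin n → ℝ) → ℝ) (α : Fin n → ℕ) : ℝ :=
  ∫ x, f x * hermiteMv α x ∂(gaussianN n)

/-- Hermite coefficient `ĝ(α)` of a polynomial. -/
noncomputable def hermiteCoeff {n : ℕ} (g : MvPolynomial (Fin n) ℝ) (α : Fin n → ℕ) : ℝ :=
  hermiteCoeffF (fun x => eval x g) α

/-- The squared Gaussian 2-norm `‖g‖₂² = E_{x ∼ N(0,1)^n}[g(x)²]`. -/
noncomputable def norm2sq {n : ℕ} (g : MvPolynomial (Fin n) ℝ) : ℝ :=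
  ∫ x, (eval x g) ^ 2 ∂(gaussianN n)

/-- The `λ`-zoom of `g` at `x`: `g_{λ|x}(y) = g(√(1-λ)·x + √λ·y)`, as a polynomial in `y`. -/
noncomputable def zoom {n : ℕ} (g : MvPolynomial (Fin n) ℝ) (lam : ℝ) (x : Fin n → ℝ) :
    MvPolynomial (Fin n) ℝ :=
  aeval (fun i => C (Real.sqrt (1 - lam) * x i) + C (Real.sqrt lam) * X i) g

/-- `HyperVar_R[g^{≥m}] = Σ_{|α| ≥ m} R^{2|α|}·ĝ(α)²`. -/
noncomputable def hyperVarGE {n : ℕ} (R : ℝ) (m : ℕ) (g : MvPolynomial (Fin n) ℝ) : ℝ :=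
  ∑' α : Fin n → ℕ, if m ≤ ∑ i, α i then R ^ (2 * ∑ i, α i) * hermiteCoeff g α ^ 2 else 0

/-- `HyperVar_R[g] = Σ_{α ≠ 0} R^{2|α|}·ĝ(α)²`. -/
noncomputable def hyperVar {n : ℕ} (R : ℝ) (g : MvPolynomial (Fin n) ℝ) : ℝ :=
  hyperVarGE R 1 g

/-- A nice distribution of polynomials of degree at most `d` on `ℝ^n`, indexed by
`υ ∈ ℝ^I`: each `g υ` has degree at most `d` and each coefficient of `g υ` is a
polynomial of degree at most `d` in `υ`. -/
def NiceFamily (n I d : ℕ) (g : (Fin I → ℝ) → MvPolynomial (Fin n) ℝ) : Prop :=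
  (∀ υ, (g υ).totalDegree ≤ d) ∧
  ∀ m : Fin n →₀ ℕ, ∃ P : MvPolynomial (Fin I) ℝ,
    P.totalDegree ≤ d ∧ ∀ υ, coeff m (g υ) = eval υ P

/-- `HyperVar_R[f] = Σ_{α ≠ 0} R^{2|α|}·f̂(α)²` for a function on Gaussian space. -/
noncomputable def hyperVarF {n : ℕ} (R : ℝ) (f : (Fin n → ℝ) → ℝ) : ℝ :=
  ∑' α : Fin n → ℕ,
    if 1 ≤ ∑ i, α i then R ^ (2 * ∑ i, α i) * hermiteCoeffF f α ^ 2 else 0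

theorem integrable_polynomial_gaussianReal (p : Polynomial ℝ) :
    Integrable (fun x => p.eval x) (gaussianReal 0 1) := by
  induction p using Polynomial.induction_on' with
  | add p q hp hq =>
    simp only [Polynomial.eval_add]
    exact hp.add hq
  | monomial k a =>
    simp only [Polynomial.eval_monomial]
    refine Integrable.const_mul ?_ a
    have h := (memLp_id_gaussianReal (μ := 0) (v := 1) (k : NNReal)).integrable_norm_pow'
    simp only [id] at h
    refine h.mono' (by fun_prop) (Filter.Eventually.of_forall fun x => by simp)

theorem integral_polynomial_stein (p : Polynomial ℝ) :
    ∫ x, (Polynomial.X * p - Polynomial.derivative p).eval x ∂(gaussianReal 0 1) = 0 := by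
  have hint : ∀ p : Polynomial ℝ,
      Integrable (fun x => gaussianPDFReal 0 1 x * p.eval x) volume := by
    intro p
    have h := integrable_polynomial_gaussianReal p
    rw [gaussianReal_of_var_ne_zero 0 one_ne_zero,
      integrable_withDensity_iff_integrable_smul' (measurable_gaussianPDF 0 1)
        (Filter.Eventually.of_forall fun x => gaussianPDF_lt_top)] at h
    simpa using h
  have hderiv : ∀ x : ℝ, HasDerivAt (fun x => gaussianPDFReal 0 1 x * p.eval x)
      (-(gaussianPDFReal 0 1 x * (Polynomial.X * p - Polynomial.derivative p).eval x)) x := by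
    intro x
    have h1 : HasDerivAt (fun x => gaussianPDFReal 0 1 x) (gaussianPDFReal 0 1 x * (-x)) x := by
      unfold gaussianPDFReal
      have : HasDerivAt (fun x : ℝ => -(x - 0) ^ 2 / (2 * ((1 : NNReal) : ℝ))) (-x) x := by
        have := ((((hasDerivAt_id x).sub_const 0).pow 2).neg).div_const (2 * ((1 : NNReal) : ℝ))
        refine this.congr_deriv ?_
        norm_num
        ring
      refine (this.exp.const_mul _).congr_deriv ?_
      ring
    refine (h1.mul (p.hasDerivAt x)).congr_deriv ?_
    simp only [Polynomial.eval_sub, Polynomial.eval_mul, Polynomial.eval_X]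
    ring
  have h := integral_eq_zero_of_hasDerivAt_of_integrable hderiv (hint _).neg (hint p)
  rw [integral_gaussianReal_eq_integral_smul one_ne_zero]
  simpa [integral_neg] using h

/-- The Hermite polynomials with real coefficients. -/
noncomputable def hermiteReal (k : ℕ) : Polynomial ℝ :=
  (Polynomial.hermite k).map (Int.castRingHom ℝ)

theorem hermiteReal_zero : hermiteReal 0 = 1 := by simp [hermiteReal]

theorem hermiteReal_succ (k : ℕ) :
    hermiteReal (k + 1) =
      Polynomial.X * hermiteReal k - Polynomial.derivative (hermiteReal k) := by
  simp [hermiteReal, Polynomial.hermite_succ, Polynomial.derivative_map]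

theorem derivative_hermiteReal_succ (k : ℕ) :
    Polynomial.derivative (hermiteReal (k + 1)) = (k + 1 : ℕ) • hermiteReal k := by
  induction k with
  | zero => simp [hermiteReal_succ, hermiteReal_zero]
  | succ k ih =>
    rw [hermiteReal_succ (k + 1), Polynomial.derivative_sub, Polynomial.derivative_mul, ih,
      Polynomial.derivative_X, Polynomial.derivative_smul, hermiteReal_succ k]
    simp only [nsmul_eq_mul]
    push_cast
    ring

theorem derivative_hermiteReal (k : ℕ) :
    Polynomial.derivative (hermiteReal k) = k • hermiteReal (k - 1) := by
  cases k with
  | zero => simp [hermiteReal_zero]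
  | succ k => exact derivative_hermiteReal_succ k

/-- The expectation of a product of three Hermite polynomials. -/
noncomputable def hermiteTriple (a b c : ℕ) : ℝ :=
  ∫ x, (hermiteReal a * hermiteReal b * hermiteReal c).eval x ∂(gaussianReal 0 1)

theorem hermiteTriple_succ (a b c : ℕ) :
    hermiteTriple (a + 1) b c = b * hermiteTriple a (b - 1) c + c * hermiteTriple a b (c - 1) := by
  have h := integral_polynomial_stein (hermiteReal a * hermiteReal b * hermiteReal c)
  have e : Polynomial.X * (hermiteReal a * hermiteReal b * hermiteReal c) -
      Polynomial.derivative (hermiteReal a * hermiteReal b * hermiteReal c) =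
      hermiteReal (a + 1) * hermiteReal b * hermiteReal c -
      Polynomial.C (b : ℝ) * (hermiteReal a * hermiteReal (b - 1) * hermiteReal c) -
      Polynomial.C (c : ℝ) * (hermiteReal a * hermiteReal b * hermiteReal (c - 1)) := by
    rw [Polynomial.derivative_mul, Polynomial.derivative_mul, hermiteReal_succ,
      derivative_hermiteReal b, derivative_hermiteReal c]
    simp only [nsmul_eq_mul, map_natCast]
    ring
  rw [e] at h
  have i := integrable_polynomial_gaussianReal
  simp_rw [Polynomial.eval_sub, Polynomial.eval_C_mul] at h
  rw [integral_sub (by exact (i _).sub ((i _).const_mul _)) ((i _).const_mul _),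
    integral_sub (i _) ((i _).const_mul _), integral_const_mul, integral_const_mul] at h
  unfold hermiteTriple
  linarith

theorem hermiteTriple_swap (a b c : ℕ) : hermiteTriple a b c = hermiteTriple b a c := by
  simp only [hermiteTriple, mul_comm (hermiteReal a)]

theorem hermiteTriple_rotate (a b c : ℕ) : hermiteTriple a b c = hermiteTriple a c b := by
  simp only [hermiteTriple, mul_right_comm]

theorem hermiteTriple_zero_zero (c : ℕ) : hermiteTriple 0 0 c = if c = 0 then 1 else 0 := by
  cases c with
  | zero => simp [hermiteTriple, hermiteReal_zero]
  | succ c =>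
    rw [hermiteTriple_rotate, hermiteTriple_swap, hermiteTriple_succ]
    simp

theorem hermiteTriple_zero (b c : ℕ) :
    hermiteTriple 0 b c = if b = c then (b.factorial : ℝ) else 0 := by
  induction b generalizing c with
  | zero => rw [hermiteTriple_zero_zero]; simp [eq_comm]
  | succ b ih =>
    rw [hermiteTriple_swap, hermiteTriple_succ, hermiteTriple_swap, hermiteTriple_swap b 0, ih, ih]
    cases c with
    | zero => simp
    | succ c =>
      by_cases h : b = c
      · subst h; simp [Nat.factorial_succ]
      · simp [h]

theorem hermiteTriple_eq_zero (a b c : ℕ)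
    (h : ∀ u v k, a = u + k → b = v + k → c = u + v → False) : hermiteTriple a b c = 0 := by
  induction a generalizing b c with
  | zero =>
    rw [hermiteTriple_zero, if_neg]
    rintro rfl
    exact h 0 b 0 rfl rfl (by simp)
  | succ a ih =>
    rw [hermiteTriple_succ]
    have h1 : (b : ℝ) * hermiteTriple a (b - 1) c = 0 := by
      rcases Nat.eq_zero_or_pos b with rfl | hb
      · simp
      · rw [ih, mul_zero]
        exact fun u v k h1 h2 h3 => h u v (k + 1) (by omega) (by omega) (by omega)
    have h2 : (c : ℝ) * hermiteTriple a b (c - 1) = 0 := by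
      rcases Nat.eq_zero_or_pos c with rfl | hc
      · simp
      · rw [ih, mul_zero]
        exact fun u v k h1 h2 h3 => h (u + 1) v k (by omega) (by omega) (by omega)
    rw [h1, h2, add_zero]

theorem hermiteTriple_mul_factorial (a b c u v k : ℕ) (ha : a = u + k) (hb : b = v + k)
    (hc : c = u + v) :
    hermiteTriple a b c * (u.factorial * v.factorial * k.factorial) =
      a.factorial * b.factorial * c.factorial := by
  induction a generalizing b c u v k with
  | zero =>
    obtain ⟨rfl, rfl⟩ : u = 0 ∧ k = 0 := by omega
    subst hb; subst hc
    simp [hermiteTriple_zero]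
  | succ a ih =>
    rw [hermiteTriple_succ]
    have h1 : (b : ℝ) * hermiteTriple a (b - 1) c * (u.factorial * v.factorial * k.factorial) =
        k * (a.factorial * b.factorial * c.factorial) := by
      cases k with
      | zero =>
        rcases Nat.eq_zero_or_pos b with rfl | hb'
        · simp
        · rw [hermiteTriple_eq_zero]
          · simp
          · intro u' v' k' h1 h2 h3
            omega
      | succ k =>
        obtain ⟨b, rfl⟩ : ∃ b', b = b' + 1 := ⟨v + k, by omega⟩
        have := ih b c u v k (by omega) (by omega) (by omega)
        rw [Nat.factorial_succ k, Nat.factorial_succ b, Nat.add_sub_cancel]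
        push_cast
        linear_combination ((b : ℝ) + 1) * (k + 1) * this
    have h2 : (c : ℝ) * hermiteTriple a b (c - 1) * (u.factorial * v.factorial * k.factorial) =
        u * (a.factorial * b.factorial * c.factorial) := by
      cases u with
      | zero =>
        rcases Nat.eq_zero_or_pos c with rfl | hc'
        · simp
        · rw [hermiteTriple_eq_zero]
          · simp
          · intro u' v' k' h1 h2 h3
            omega
      | succ u =>
        obtain ⟨c, rfl⟩ : ∃ c', c = c' + 1 := ⟨u + v, by omega⟩
        have := ih b c u v k (by omega) (by omega) (by omega)
        rw [Nat.factorial_succ u, Nat.factorial_succ c, Nat.add_sub_cancel]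
        push_cast
        linear_combination ((c : ℝ) + 1) * (u + 1) * this
    have h3 : ((a : ℝ) + 1) = u + k := by exact_mod_cast ha
    rw [Nat.factorial_succ a]
    push_cast
    rw [h3]
    linear_combination h1 + h2

/-- The multi-index binomial coefficient, as a real number. -/
noncomputable def multiChoose {n : ℕ} (α u : Fin n → ℕ) : ℝ :=
  ∏ i, ((α i).choose (u i) : ℝ)

theorem multiChoose_nonneg {n : ℕ} (α u : Fin n → ℕ) : 0 ≤ multiChoose α u :=
  Finset.prod_nonneg fun _ _ => Nat.cast_nonneg _

/-- The multi-indices with all entries at most `D`. -/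
def multiBox (n D : ℕ) : Finset (Fin n → ℕ) :=
  Fintype.piFinset fun _ => Finset.range (D + 1)

theorem mem_multiBox {n D : ℕ} {α : Fin n → ℕ} : α ∈ multiBox n D ↔ ∀ i, α i ≤ D := by
  simp [multiBox, Fintype.mem_piFinset]

theorem sum_multiChoose_le {n : ℕ} (s : Finset ((Fin n → ℕ) × (Fin n → ℕ))) (α : Fin n → ℕ)
    {t : ℝ} (ht : 0 ≤ t) :
    ∑ p ∈ s with p.1 + p.2 = α, t ^ (∑ i, p.1 i) * multiChoose α p.1 ≤ (1 + t) ^ (∑ i, α i) := by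
  classical
  have hinj : Set.InjOn Prod.fst
      (↑(s.filter fun p => p.1 + p.2 = α) : Set ((Fin n → ℕ) × (Fin n → ℕ))) := by
    intro p hp p' hp' h
    simp only [Finset.coe_filter, Set.mem_ofPred_eq] at hp hp'
    refine Prod.ext h ?_
    have := hp.2.trans hp'.2.symm
    rw [h] at this
    exact add_left_cancel this
  rw [← Finset.sum_image (f := fun u => t ^ (∑ i, u i) * multiChoose α u) hinj]
  calc _ ≤ ∑ u ∈ Fintype.piFinset fun i => Finset.range (α i + 1),
        t ^ (∑ i, u i) * multiChoose α u := by
        refine Finset.sum_le_sum_of_subset_of_nonneg ?_ fun u _ _ =>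
          mul_nonneg (pow_nonneg ht _) (multiChoose_nonneg _ _)
        intro u hu
        simp only [Finset.mem_image, Finset.mem_filter] at hu
        obtain ⟨p, ⟨_, hp⟩, rfl⟩ := hu
        simp only [Fintype.mem_piFinset, Finset.mem_range, ← hp, Pi.add_apply]
        intro i
        omega
    _ = ∏ i, ∑ k ∈ Finset.range (α i + 1), t ^ k * ((α i).choose k : ℝ) := by
        rw [Finset.prod_univ_sum]
        refine Finset.sum_congr rfl fun u _ => ?_
        rw [multiChoose, Finset.prod_mul_distrib, Finset.prod_pow_eq_pow_sum]
    _ = (1 + t) ^ (∑ i, α i) := by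
        rw [← Finset.prod_pow_eq_pow_sum]
        refine Finset.prod_congr rfl fun i _ => ?_
        rw [add_comm 1 t, add_pow]
        simp

/-- The sum over `k` of `C(u + k, u) * s (u + k)`. -/
noncomputable def shiftedSum {n : ℕ} (D : ℕ) (s : (Fin n → ℕ) → ℝ) (u : Fin n → ℕ) : ℝ :=
  ∑ k ∈ multiBox n D, multiChoose (u + k) u * s (u + k)

theorem shiftedSum_nonneg {n D : ℕ} {s : (Fin n → ℕ) → ℝ} (hs : ∀ α, 0 ≤ s α)
    (u : Fin n → ℕ) : 0 ≤ shiftedSum D s u :=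
  Finset.sum_nonneg fun _ _ => mul_nonneg (multiChoose_nonneg _ _) (hs _)

theorem shiftedSum_zero {n D : ℕ} (s : (Fin n → ℕ) → ℝ) :
    shiftedSum D s 0 = ∑ α ∈ multiBox n D, s α := by
  simp [shiftedSum, multiChoose]

theorem sum_pow_mul_shiftedSum_le {n D : ℕ} {s : (Fin n → ℕ) → ℝ} (hs : ∀ α, 0 ≤ s α)
    (hs0 : ∀ α ∉ multiBox n D, s α = 0) {t : ℝ} (ht : 0 ≤ t) :
    ∑ u ∈ multiBox n D, t ^ (∑ i, u i) * shiftedSum D s u ≤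
      ∑ α ∈ multiBox n D, (1 + t) ^ (∑ i, α i) * s α := by
  classical
  calc _ = ∑ p ∈ multiBox n D ×ˢ multiBox n D,
        t ^ (∑ i, p.1 i) * (multiChoose (p.1 + p.2) p.1 * s (p.1 + p.2)) := by
        rw [Finset.sum_product]
        simp only [shiftedSum, Finset.mul_sum]
    _ = ∑ p ∈ multiBox n D ×ˢ multiBox n D, ∑ α ∈ multiBox n D,
        if p.1 + p.2 = α then t ^ (∑ i, p.1 i) * multiChoose α p.1 * s α else 0 := by
        refine Finset.sum_congr rfl fun p _ => ?_
        rw [Finset.sum_ite_eq]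
        split_ifs with h
        · ring
        · rw [hs0 _ h]; ring
    _ = ∑ α ∈ multiBox n D, (∑ p ∈ multiBox n D ×ˢ multiBox n D with p.1 + p.2 = α,
        t ^ (∑ i, p.1 i) * multiChoose α p.1) * s α := by
        rw [Finset.sum_comm]
        refine Finset.sum_congr rfl fun α _ => ?_
        rw [Finset.sum_mul, Finset.sum_filter]
    _ ≤ _ := Finset.sum_le_sum fun α _ =>
        mul_le_mul_of_nonneg_right (sum_multiChoose_le _ α ht) (hs α)

theorem sq_convolution_le {n D : ℕ} {S : (Fin n → ℕ) → (Fin n → ℕ) → ℝ} {s : (Fin n → ℕ) → ℝ}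
    (hs : ∀ α, 0 ≤ s α) (hS : ∀ α β, S α β ^ 2 ≤ s α * s β) (γ : Fin n → ℕ) :
    (∑ p ∈ multiBox n D ×ˢ multiBox n D with p.1 + p.2 = γ, ∑ k ∈ multiBox n D,
      S (p.1 + k) (p.2 + k) * Real.sqrt (multiChoose (p.1 + k) p.1 * multiChoose (p.2 + k) p.2 *
        multiChoose γ p.1)) ^ 2 ≤
    2 ^ (∑ i, γ i) * ∑ p ∈ multiBox n D ×ˢ multiBox n D with p.1 + p.2 = γ,
      shiftedSum D s p.1 * shiftedSum D s p.2 := by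
  classical
  set P := (multiBox n D ×ˢ multiBox n D).filter fun p => p.1 + p.2 = γ
  have hc := multiChoose_nonneg (n := n)
  have hinner : ∀ u v : Fin n → ℕ,
      (∑ k ∈ multiBox n D, S (u + k) (v + k) *
        Real.sqrt (multiChoose (u + k) u * multiChoose (v + k) v)) ^ 2 ≤
      shiftedSum D s u * shiftedSum D s v := by
    intro u v
    have habs : |∑ k ∈ multiBox n D, S (u + k) (v + k) *
        Real.sqrt (multiChoose (u + k) u * multiChoose (v + k) v)| ≤
        ∑ k ∈ multiBox n D, Real.sqrt (multiChoose (u + k) u * s (u + k)) *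
          Real.sqrt (multiChoose (v + k) v * s (v + k)) := by
      refine (Finset.abs_sum_le_sum_abs _ _).trans (Finset.sum_le_sum fun k _ => ?_)
      rw [← Real.sqrt_mul (mul_nonneg (hc _ _) (hs _))]
      refine Real.abs_le_sqrt ?_
      rw [mul_pow, Real.sq_sqrt (mul_nonneg (hc _ _) (hc _ _))]
      calc _ ≤ (s (u + k) * s (v + k)) * (multiChoose (u + k) u * multiChoose (v + k) v) :=
            mul_le_mul_of_nonneg_right (hS _ _) (mul_nonneg (hc _ _) (hc _ _))
        _ = _ := by ring
    rw [← sq_abs]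
    refine (pow_le_pow_left₀ (abs_nonneg _) habs 2).trans ?_
    refine (Finset.sum_mul_sq_le_sq_mul_sq _ _ _).trans_eq ?_
    simp only [shiftedSum]
    congr 1 <;>
      exact Finset.sum_congr rfl fun k _ => Real.sq_sqrt (mul_nonneg (hc _ _) (hs _))
  calc _ = (∑ p ∈ P, Real.sqrt (multiChoose γ p.1) * ∑ k ∈ multiBox n D,
        S (p.1 + k) (p.2 + k) *
          Real.sqrt (multiChoose (p.1 + k) p.1 * multiChoose (p.2 + k) p.2)) ^ 2 := by
        congr 1
        refine Finset.sum_congr rfl fun p _ => ?_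
        rw [Finset.mul_sum]
        refine Finset.sum_congr rfl fun k _ => ?_
        rw [Real.sqrt_mul (mul_nonneg (hc _ _) (hc _ _)) (multiChoose γ p.1)]
        ring
    _ ≤ _ := Finset.sum_mul_sq_le_sq_mul_sq _ _ _
    _ ≤ _ := by
        refine mul_le_mul ?_ (Finset.sum_le_sum fun p _ => hinner _ _)
          (Finset.sum_nonneg fun _ _ => sq_nonneg _) (by positivity)
        have h := sum_multiChoose_le (multiBox n D ×ˢ multiBox n D) γ zero_le_one
        norm_num at h
        refine le_of_eq_of_le (Finset.sum_congr rfl fun p _ => ?_) h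
        exact Real.sq_sqrt (hc _ _)

theorem sum_convolution_le {n D : ℕ} {G s : (Fin n → ℕ) → ℝ} (hs : ∀ α, 0 ≤ s α)
    (hs0 : ∀ α ∉ multiBox n D, s α = 0)
    (hG : ∀ γ, G γ ^ 2 ≤ 2 ^ (∑ i, γ i) *
      ∑ p ∈ multiBox n D ×ˢ multiBox n D with p.1 + p.2 = γ,
        shiftedSum D s p.1 * shiftedSum D s p.2)
    {r R : ℝ} (hrR : 1 + 2 * r ^ 2 ≤ R ^ 2) (U : Finset (Fin n → ℕ)) :
    ∑ γ ∈ U, (if 1 ≤ ∑ i, γ i then r ^ (2 * ∑ i, γ i) * G γ ^ 2 else 0) ≤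
      (2 * (∑ α ∈ multiBox n D, s α) +
        ∑ α ∈ multiBox n D, if 1 ≤ ∑ i, α i then R ^ (2 * ∑ i, α i) * s α else 0) *
      ∑ α ∈ multiBox n D, if 1 ≤ ∑ i, α i then R ^ (2 * ∑ i, α i) * s α else 0 := by
  classical
  set B := multiBox n D
  set t := 2 * r ^ 2
  have ht : 0 ≤ t := by positivity
  set W : (Fin n → ℕ) → ℝ := fun u => t ^ (∑ i, u i) * shiftedSum D s u
  have hW : ∀ u, 0 ≤ W u := fun u => mul_nonneg (pow_nonneg ht _) (shiftedSum_nonneg hs u)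
  have h0 : (0 : Fin n → ℕ) ∈ B := mem_multiBox.2 fun i => by simp
  set V := ∑ α ∈ B, if 1 ≤ ∑ i, α i then R ^ (2 * ∑ i, α i) * s α else 0
  have hterm : ∀ γ, (if 1 ≤ ∑ i, γ i then r ^ (2 * ∑ i, γ i) * G γ ^ 2 else 0) ≤
      ∑ p ∈ (B ×ˢ B).erase 0, if p.1 + p.2 = γ then W p.1 * W p.2 else 0 := by
    intro γ
    split_ifs with hγ
    · calc r ^ (2 * ∑ i, γ i) * G γ ^ 2 ≤ r ^ (2 * ∑ i, γ i) * _ :=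
            mul_le_mul_of_nonneg_left (hG γ) (by rw [pow_mul]; positivity)
        _ = ∑ p ∈ B ×ˢ B with p.1 + p.2 = γ, W p.1 * W p.2 := by
            rw [← mul_assoc, pow_mul, ← mul_pow, mul_comm (r ^ 2) 2, Finset.mul_sum]
            refine Finset.sum_congr rfl fun p hp => ?_
            have : ∑ i, γ i = ∑ i, p.1 i + ∑ i, p.2 i := by
              rw [← (Finset.mem_filter.1 hp).2]
              simp [Finset.sum_add_distrib]
            rw [this, pow_add]
            simp only [W, t]
            ring
        _ = ∑ p ∈ B ×ˢ B, if p.1 + p.2 = γ then W p.1 * W p.2 else 0 := Finset.sum_filter _ _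
        _ = _ := by
            symm
            apply Finset.sum_erase
            refine if_neg fun h => ?_
            simp [← h] at hγ
    · exact Finset.sum_nonneg fun p _ => by
        split_ifs
        · exact mul_nonneg (hW _) (hW _)
        · exact le_rfl
  have hsum : ∑ γ ∈ U, (if 1 ≤ ∑ i, γ i then r ^ (2 * ∑ i, γ i) * G γ ^ 2 else 0) ≤
      (∑ u ∈ B, W u) ^ 2 - W 0 ^ 2 := by
    calc _ ≤ ∑ γ ∈ U, ∑ p ∈ (B ×ˢ B).erase 0, if p.1 + p.2 = γ then W p.1 * W p.2 else 0 :=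
          Finset.sum_le_sum fun γ _ => hterm γ
      _ = ∑ p ∈ (B ×ˢ B).erase 0, if p.1 + p.2 ∈ U then W p.1 * W p.2 else 0 := by
          rw [Finset.sum_comm]
          exact Finset.sum_congr rfl fun p _ => Finset.sum_ite_eq _ _ _
      _ ≤ ∑ p ∈ (B ×ˢ B).erase 0, W p.1 * W p.2 := Finset.sum_le_sum fun p _ => by
          split_ifs
          · exact le_rfl
          · exact mul_nonneg (hW _) (hW _)
      _ = _ := by
          have := Finset.add_sum_erase (B ×ˢ B) (fun p => W p.1 * W p.2)
            (a := (0 : (Fin n → ℕ) × (Fin n → ℕ))) (Finset.mem_product.2 ⟨h0, h0⟩)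
          rw [sq, Finset.sum_mul_sum, ← Finset.sum_product', ← this]
          simp only [Prod.fst_zero, Prod.snd_zero]
          ring
  have hW0 : W 0 = ∑ α ∈ B, s α := by simp [W, shiftedSum_zero, B]
  have hWV : ∑ u ∈ B, W u ≤ ∑ α ∈ B, s α + V := by
    refine (sum_pow_mul_shiftedSum_le hs hs0 ht).trans ?_
    rw [← Finset.sum_add_distrib]
    refine Finset.sum_le_sum fun α _ => ?_
    split_ifs with hα
    · rw [pow_mul]
      have : (1 + t) ^ (∑ i, α i) * s α ≤ (R ^ 2) ^ (∑ i, α i) * s α :=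
        mul_le_mul_of_nonneg_right (pow_le_pow_left₀ (by positivity) hrR _) (hs α)
      linarith [hs α]
    · rw [show ∑ i, α i = 0 by omega]
      simp
  have hpos : 0 ≤ ∑ u ∈ B, W u := Finset.sum_nonneg fun u _ => hW u
  refine hsum.trans ?_
  rw [hW0]
  have := pow_le_pow_left₀ hpos hWV 2
  nlinarith

theorem hermiteFn_eq (k : ℕ) (t : ℝ) :
    hermiteFn k t = (hermiteReal k).eval t / Real.sqrt (Nat.factorial k) := rfl

theorem hermiteFn_mul_mul (a b c : ℕ) (t : ℝ) :
    hermiteFn a t * hermiteFn b t * hermiteFn c t =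
      (hermiteReal a * hermiteReal b * hermiteReal c).eval t /
        Real.sqrt (a.factorial * b.factorial * c.factorial) := by
  rw [Real.sqrt_mul (by positivity), Real.sqrt_mul (by positivity)]
  simp only [hermiteFn_eq, Polynomial.eval_mul]
  ring

theorem integrable_hermiteFn_mul_mul (a b c : ℕ) :
    Integrable (fun t => hermiteFn a t * hermiteFn b t * hermiteFn c t) (gaussianReal 0 1) := by
  simp only [hermiteFn_mul_mul]
  exact (integrable_polynomial_gaussianReal _).div_const _

theorem integral_hermiteFn_mul_mul (a b c : ℕ) :
    ∫ t, hermiteFn a t * hermiteFn b t * hermiteFn c t ∂(gaussianReal 0 1) =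
      hermiteTriple a b c / Real.sqrt (a.factorial * b.factorial * c.factorial) := by
  simp only [hermiteFn_mul_mul, hermiteTriple, integral_div]

theorem integral_hermiteFn_mul_mul_add (u v k : ℕ) :
    ∫ t, hermiteFn (u + k) t * hermiteFn (v + k) t * hermiteFn (u + v) t ∂(gaussianReal 0 1) =
      Real.sqrt ((u + k).choose u * (v + k).choose v * (u + v).choose u) := by
  rw [integral_hermiteFn_mul_mul]
  have h := hermiteTriple_mul_factorial (u + k) (v + k) (u + v) u v k rfl rfl rfl
  rw [Nat.cast_add_choose, Nat.cast_add_choose, Nat.cast_add_choose]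
  set A : ℝ := (u + k).factorial * (v + k).factorial * (u + v).factorial
  set F : ℝ := u.factorial * v.factorial * k.factorial
  have hA : 0 < A := by positivity
  have hF : 0 < F := by positivity
  have e : ((u + k).factorial : ℝ) / (u.factorial * k.factorial) *
      ((v + k).factorial / (v.factorial * k.factorial)) *
      ((u + v).factorial / (u.factorial * v.factorial)) = A / F ^ 2 := by
    simp only [A, F]
    field_simp
  rw [e, Real.sqrt_div hA.le, Real.sqrt_sq hF.le, eq_div_of_mul_eq hF.ne' h, div_right_comm,
    Real.div_sqrt]

/-- The expectation of a product of three multivariate Hermite polynomials. -/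
noncomputable def hermiteMvTriple {n : ℕ} (α β γ : Fin n → ℕ) : ℝ :=
  ∫ x, hermiteMv α x * hermiteMv β x * hermiteMv γ x ∂(gaussianN n)

theorem integrable_hermiteMv_mul_mul {n : ℕ} (α β γ : Fin n → ℕ) :
    Integrable (fun x => hermiteMv α x * hermiteMv β x * hermiteMv γ x) (gaussianN n) := by
  simp only [hermiteMv, ← Finset.prod_mul_distrib]
  exact Integrable.fintype_prod (f := fun i t =>
    hermiteFn (α i) t * hermiteFn (β i) t * hermiteFn (γ i) t)
    fun i => integrable_hermiteFn_mul_mul _ _ _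

theorem hermiteMvTriple_eq_prod {n : ℕ} (α β γ : Fin n → ℕ) :
    hermiteMvTriple α β γ = ∏ i, ∫ t, hermiteFn (α i) t * hermiteFn (β i) t * hermiteFn (γ i) t
      ∂(gaussianReal 0 1) := by
  simp only [hermiteMvTriple, hermiteMv, ← Finset.prod_mul_distrib]
  exact integral_fintype_prod_eq_prod (fun i t =>
    hermiteFn (α i) t * hermiteFn (β i) t * hermiteFn (γ i) t)

theorem hermiteMvTriple_add {n : ℕ} (u v k : Fin n → ℕ) :
    hermiteMvTriple (u + k) (v + k) (u + v) =
      Real.sqrt (multiChoose (u + k) u * multiChoose (v + k) v * multiChoose (u + v) u) := by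
  simp only [hermiteMvTriple_eq_prod, Pi.add_apply, integral_hermiteFn_mul_mul_add, multiChoose,
    ← Finset.prod_mul_distrib]
  rw [Real.sqrt_prod _ fun i _ => by positivity]

theorem exists_of_hermiteMvTriple_ne_zero {n : ℕ} {α β γ : Fin n → ℕ}
    (h : hermiteMvTriple α β γ ≠ 0) :
    ∃ u v k : Fin n → ℕ, α = u + k ∧ β = v + k ∧ γ = u + v := by
  have : ∀ i, ∃ u v k : ℕ, α i = u + k ∧ β i = v + k ∧ γ i = u + v := by
    intro i
    by_contra hi
    apply h
    rw [hermiteMvTriple_eq_prod]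
    refine Finset.prod_eq_zero (Finset.mem_univ i) ?_
    rw [integral_hermiteFn_mul_mul, hermiteTriple_eq_zero, zero_div]
    exact fun u v k h1 h2 h3 => hi ⟨u, v, k, h1, h2, h3⟩
  choose u v k huvk using this
  exact ⟨u, v, k, funext fun i => (huvk i).1, funext fun i => (huvk i).2.1,
    funext fun i => (huvk i).2.2⟩

theorem hermiteMv_zero {n : ℕ} (x : Fin n → ℝ) : hermiteMv 0 x = 1 := by
  simp [hermiteMv, hermiteFn_eq, hermiteReal_zero]

theorem integrable_hermiteMv_mul {n : ℕ} (α β : Fin n → ℕ) :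
    Integrable (fun x => hermiteMv α x * hermiteMv β x) (gaussianN n) := by
  simpa [hermiteMv_zero] using integrable_hermiteMv_mul_mul α β 0

theorem integral_hermiteMv_mul {n : ℕ} (α β : Fin n → ℕ) :
    ∫ x, hermiteMv α x * hermiteMv β x ∂(gaussianN n) = if α = β then 1 else 0 := by
  have e : ∫ x, hermiteMv α x * hermiteMv β x ∂(gaussianN n) = hermiteMvTriple α β 0 := by
    simp [hermiteMvTriple, hermiteMv_zero]
  rw [e]
  split_ifs with h
  · subst h
    simpa [multiChoose] using hermiteMvTriple_add 0 0 α
  · by_contra h'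
    obtain ⟨u, v, k, rfl, rfl, h0⟩ := exists_of_hermiteMvTriple_ne_zero h'
    refine h (funext fun i => ?_)
    have := congrFun h0 i
    simp only [Pi.zero_apply, Pi.add_apply] at this ⊢
    omega

theorem sum_mul_hermiteMvTriple {n D : ℕ} {S : (Fin n → ℕ) → (Fin n → ℕ) → ℝ}
    (hS : ∀ α β, S α β ≠ 0 → α ∈ multiBox n D ∧ β ∈ multiBox n D) (γ : Fin n → ℕ) :
    ∑ p ∈ multiBox n D ×ˢ multiBox n D, S p.1 p.2 * hermiteMvTriple p.1 p.2 γ =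
      ∑ p ∈ multiBox n D ×ˢ multiBox n D with p.1 + p.2 = γ, ∑ k ∈ multiBox n D,
        S (p.1 + k) (p.2 + k) * Real.sqrt (multiChoose (p.1 + k) p.1 *
          multiChoose (p.2 + k) p.2 * multiChoose γ p.1) := by
  classical
  rw [← Finset.sum_product' (f := fun (p : (Fin n → ℕ) × (Fin n → ℕ)) k =>
    S (p.1 + k) (p.2 + k) *
    Real.sqrt (multiChoose (p.1 + k) p.1 * multiChoose (p.2 + k) p.2 * multiChoose γ p.1))]
  symm
  refine Finset.sum_bij_ne_zero (fun r _ _ => (r.1.1 + r.2, r.1.2 + r.2)) ?_ ?_ ?_ ?_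
  · intro r _ hne
    exact Finset.mem_product.2 (hS _ _ (left_ne_zero_of_mul hne))
  · rintro ⟨⟨u, v⟩, k⟩ hr _ ⟨⟨u', v'⟩, k'⟩ hr' _ h
    simp only [Finset.mem_product, Finset.mem_filter] at hr hr'
    have h1 := hr.1.2
    have h2 := hr'.1.2
    simp only [Prod.mk.injEq] at h ⊢
    have key : ∀ i, u i = u' i ∧ v i = v' i ∧ k i = k' i := by
      intro i
      have a1 := congrFun h1 i
      have a2 := congrFun h2 i
      have a3 := congrFun h.1 i
      have a4 := congrFun h.2 i
      simp only [Pi.add_apply] at a1 a2 a3 a4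
      omega
    exact ⟨⟨funext fun i => (key i).1, funext fun i => (key i).2.1⟩,
      funext fun i => (key i).2.2⟩
  · rintro ⟨α, β⟩ hp hne
    obtain ⟨u, v, k, rfl, rfl, rfl⟩ :=
      exists_of_hermiteMvTriple_ne_zero (right_ne_zero_of_mul hne)
    rw [hermiteMvTriple_add] at hne
    simp only [Finset.mem_product, mem_multiBox, Pi.add_apply] at hp
    refine ⟨((u, v), k), ?_, hne, rfl⟩
    simp only [Finset.mem_product, Finset.mem_filter, mem_multiBox, and_true]
    refine ⟨⟨fun i => ?_, fun i => ?_⟩, fun i => ?_⟩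
    · have := hp.1 i
      omega
    · have := hp.2 i
      omega
    · have := hp.1 i
      omega
  · rintro ⟨⟨u, v⟩, k⟩ hr _
    simp only [Finset.mem_product, Finset.mem_filter] at hr
    obtain ⟨⟨_, rfl⟩, _⟩ := hr
    simp only [hermiteMvTriple_add]

theorem X_mul_hermiteReal (k : ℕ) :
    Polynomial.X * hermiteReal k = hermiteReal (k + 1) + (k : ℝ) • hermiteReal (k - 1) := by
  rw [hermiteReal_succ, derivative_hermiteReal]
  simp [Nat.cast_smul_eq_nsmul]

theorem X_pow_mem_span_hermiteReal (m : ℕ) :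
    (Polynomial.X ^ m : Polynomial ℝ) ∈
      Submodule.span ℝ (hermiteReal '' (Finset.range (m + 1) : Set ℕ)) := by
  induction m with
  | zero => exact Submodule.subset_span ⟨0, by simp, by simp [hermiteReal_zero]⟩
  | succ m ih =>
    rw [pow_succ']
    generalize (Polynomial.X ^ m : Polynomial ℝ) = p at ih
    induction ih using Submodule.span_induction with
    | mem p hp =>
      obtain ⟨k, hk, rfl⟩ := hp
      simp only [Finset.coe_range, Set.mem_Iio] at hk
      rw [X_mul_hermiteReal]
      refine Submodule.add_mem _ (Submodule.subset_span ⟨k + 1, ?_, rfl⟩)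
        (Submodule.smul_mem _ _ (Submodule.subset_span ⟨k - 1, ?_, rfl⟩)) <;>
      · simp only [Finset.coe_range, Set.mem_Iio]
        omega
    | zero => simp
    | add p q _ _ hp hq => rw [mul_add]; exact Submodule.add_mem _ hp hq
    | smul a p _ hp => rw [mul_smul_comm]; exact Submodule.smul_mem _ _ hp

theorem exists_pow_eq_sum_hermiteFn (D : ℕ) :
    ∃ e : ℕ → ℕ → ℝ, ∀ m ≤ D, ∀ x : ℝ,
      x ^ m = ∑ k ∈ Finset.range (D + 1), e m k * hermiteFn k x := by
  have : ∀ m, ∃ e : ℕ → ℝ, m ≤ D → ∀ x : ℝ,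
      x ^ m = ∑ k ∈ Finset.range (D + 1), e k * hermiteFn k x := by
    intro m
    by_cases hm : m ≤ D
    · have h := Submodule.span_mono (R := ℝ) (Set.image_mono (f := hermiteReal)
        (Finset.coe_subset.2 (Finset.range_mono (Nat.succ_le_succ hm))))
        (X_pow_mem_span_hermiteReal m)
      obtain ⟨c, hc⟩ := Submodule.mem_span_image_finset_iff_exists_fun' (R := ℝ) |>.1 h
      refine ⟨fun k => c k * Real.sqrt k.factorial, fun _ x => ?_⟩
      have hx := congrArg (Polynomial.eval x) hc
      simp only [Polynomial.eval_finsetSum, Polynomial.eval_smul, Polynomial.eval_pow,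
        Polynomial.eval_X, smul_eq_mul] at hx
      rw [← hx]
      refine Finset.sum_congr rfl fun k _ => ?_
      have : Real.sqrt k.factorial ≠ 0 := by positivity
      rw [hermiteFn_eq]
      field_simp
    · exact ⟨0, fun h => absurd h hm⟩
  choose e he using this
  exact ⟨e, he⟩

theorem exists_eval_eq_sum_hermiteMv (n D : ℕ) :
    ∃ (M : Finset (Fin n →₀ ℕ)) (E : (Fin n →₀ ℕ) → (Fin n → ℕ) → ℝ),
      ∀ p : MvPolynomial (Fin n) ℝ, p.totalDegree ≤ D → ∀ x, eval x p =
        ∑ α ∈ multiBox n D, (∑ m ∈ M, coeff m p * E m α) * hermiteMv α x := by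
  classical
  obtain ⟨e, he⟩ := exists_pow_eq_sum_hermiteFn D
  refine ⟨(multiBox n D).image Finsupp.equivFunOnFinite.symm,
    fun m α => ∏ i, e (m i) (α i), fun p hp x => ?_⟩
  have hsupp : p.support ⊆ (multiBox n D).image Finsupp.equivFunOnFinite.symm := by
    intro m hm
    refine Finset.mem_image.2 ⟨m, mem_multiBox.2 fun i => ?_, by ext; simp⟩
    exact ((monomial_le_degreeOf i hm).trans (degreeOf_le_totalDegree p i)).trans hp
  rw [eval_eq', Finset.sum_subset hsupp fun m _ hm => by
    rw [notMem_support_iff.1 hm, zero_mul]]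
  simp only [Finset.sum_mul]
  rw [Finset.sum_comm]
  refine Finset.sum_congr rfl fun m hm => ?_
  have hm' : ∀ i, m i ≤ D := by
    obtain ⟨a, ha, rfl⟩ := Finset.mem_image.1 hm
    exact mem_multiBox.1 ha
  simp only [mul_assoc]
  rw [← Finset.mul_sum, Finset.prod_congr rfl fun i _ => he (m i) (hm' i) (x i),
    Finset.prod_univ_sum]
  simp only [multiBox, hermiteMv, Finset.prod_mul_distrib]

theorem integrable_eval_gaussianN {n : ℕ} (p : MvPolynomial (Fin n) ℝ) :
    Integrable (fun x => eval x p) (gaussianN n) := by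
  simp only [eval_eq']
  refine integrable_finsetSum _ fun m _ => Integrable.const_mul ?_ _
  refine Integrable.fintype_prod (f := fun i t => t ^ m i) fun i => ?_
  simpa using integrable_polynomial_gaussianReal (Polynomial.X ^ m i)

theorem hermiteCoeff_of_eq_sum {n D : ℕ} {p : MvPolynomial (Fin n) ℝ} {c : (Fin n → ℕ) → ℝ}
    (hp : ∀ x, eval x p = ∑ α ∈ multiBox n D, c α * hermiteMv α x) (β : Fin n → ℕ) :
    hermiteCoeff p β = if β ∈ multiBox n D then c β else 0 := by
  simp only [hermiteCoeff, hermiteCoeffF, hp, Finset.sum_mul, mul_assoc]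
  rw [integral_finsetSum _ fun α _ => (integrable_hermiteMv_mul α β).const_mul _]
  simp only [integral_const_mul, integral_hermiteMv_mul]
  simp

theorem norm2sq_of_eq_sum {n D : ℕ} {p : MvPolynomial (Fin n) ℝ} {c : (Fin n → ℕ) → ℝ}
    (hp : ∀ x, eval x p = ∑ α ∈ multiBox n D, c α * hermiteMv α x) :
    norm2sq p = ∑ α ∈ multiBox n D, c α ^ 2 := by
  have hx : ∀ x, eval x p ^ 2 = ∑ α ∈ multiBox n D, ∑ β ∈ multiBox n D,
      c α * c β * (hermiteMv α x * hermiteMv β x) := by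
    intro x
    rw [hp, sq, Finset.sum_mul_sum]
    exact Finset.sum_congr rfl fun α _ => Finset.sum_congr rfl fun β _ => by ring
  simp only [norm2sq, hx]
  rw [integral_finsetSum _ fun α _ => integrable_finsetSum _ fun β _ =>
    (integrable_hermiteMv_mul α β).const_mul _]
  refine Finset.sum_congr rfl fun α hα => ?_
  rw [integral_finsetSum _ fun β _ => (integrable_hermiteMv_mul α β).const_mul _]
  simp only [integral_const_mul, integral_hermiteMv_mul]
  simp [hα, sq]

theorem hyperVar_of_hermiteCoeff_eq_zero {n D : ℕ} {p : MvPolynomial (Fin n) ℝ}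
    (hp : ∀ α ∉ multiBox n D, hermiteCoeff p α = 0) (R : ℝ) :
    hyperVar R p = ∑ α ∈ multiBox n D,
      if 1 ≤ ∑ i, α i then R ^ (2 * ∑ i, α i) * hermiteCoeff p α ^ 2 else 0 := by
  rw [hyperVar, hyperVarGE]
  refine tsum_eq_sum fun α hα => ?_
  simp [hp α hα]

theorem NiceFamily.exists_hermiteCoeff_eq {n I d : ℕ}
    {q : (Fin I → ℝ) → MvPolynomial (Fin n) ℝ} (hq : NiceFamily n I d q) :
    (∃ P : (Fin n → ℕ) → MvPolynomial (Fin I) ℝ, ∀ υ α, hermiteCoeff (q υ) α = eval υ (P α)) ∧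
    (∀ υ, ∀ α ∉ multiBox n d, hermiteCoeff (q υ) α = 0) ∧
    ∀ υ x, eval x (q υ) = ∑ α ∈ multiBox n d, hermiteCoeff (q υ) α * hermiteMv α x := by
  classical
  obtain ⟨M, E, hE⟩ := exists_eval_eq_sum_hermiteMv n d
  have hc := fun υ => hermiteCoeff_of_eq_sum (hE (q υ) (hq.1 υ))
  choose Q _ hQ using hq.2
  refine ⟨⟨fun α => if α ∈ multiBox n d then ∑ m ∈ M, Q m * C (E m α) else 0, fun υ α => ?_⟩,
    fun υ α hα => by rw [hc, if_neg hα], fun υ x => ?_⟩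
  · rw [hc]
    by_cases hα : α ∈ multiBox n d <;> simp [hα, hQ]
  · rw [hE (q υ) (hq.1 υ)]
    exact Finset.sum_congr rfl fun α hα => by rw [hc, if_pos hα]

theorem sq_integral_mul_le {Ω : Type*} [MeasurableSpace Ω] {μ : Measure Ω} {f g : Ω → ℝ}
    (hf : Integrable (fun ω => f ω * f ω) μ) (hfg : Integrable (fun ω => f ω * g ω) μ)
    (hg : Integrable (fun ω => g ω * g ω) μ) :
    (∫ ω, f ω * g ω ∂μ) ^ 2 ≤ (∫ ω, f ω * f ω ∂μ) * ∫ ω, g ω * g ω ∂μ := by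
  have h : ∀ a : ℝ, 0 ≤ (∫ ω, g ω * g ω ∂μ) * (a * a) + 2 * (∫ ω, f ω * g ω ∂μ) * a +
      ∫ ω, f ω * f ω ∂μ := by
    intro a
    have e : ∫ ω, (g ω * g ω * (a * a) + 2 * a * (f ω * g ω) + f ω * f ω) ∂μ =
        (∫ ω, g ω * g ω ∂μ) * (a * a) + 2 * (∫ ω, f ω * g ω ∂μ) * a + ∫ ω, f ω * f ω ∂μ := by
      rw [integral_add (by exact (hg.mul_const _).add (hfg.const_mul _)) hf,
        integral_add (hg.mul_const _) (hfg.const_mul _), integral_mul_const, integral_const_mul]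
      ring
    rw [← e]
    refine integral_nonneg fun ω => ?_
    have : g ω * g ω * (a * a) + 2 * a * (f ω * g ω) + f ω * f ω = (a * g ω + f ω) ^ 2 := by ring
    simp only [this]
    exact sq_nonneg _
  have := discrim_le_zero h
  rw [discrim] at this
  nlinarith

/-- Hypervariance of the averaged square of a nice distribution: for a nice
distribution `(q_υ)` of polynomials, `R̄ ≥ √3`, `R₀ = R̄^{1/4}/13`, and
`g(x) = E_υ[q_υ(x)²]`, we have
`HyperVar_{R₀}[g] ≤ 8·(E_υ[‖q_υ‖₂²] + E_υ[HyperVar_{R̄}[q_υ]])·E_υ[HyperVar_{R̄}[q_υ]]`. -/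
theorem hypervar_of_averaged_square (n I d : ℕ)
    (q : (Fin I → ℝ) → MvPolynomial (Fin n) ℝ) (hnice : NiceFamily n I d q)
    (Rbar : ℝ) (hR : Real.sqrt 3 ≤ Rbar) :
    hyperVarF (Rbar ^ ((1 : ℝ) / 4) / 13)
        (fun x => ∫ υ, (eval x (q υ)) ^ 2 ∂(gaussianN I)) ≤
      8 * ((∫ υ, norm2sq (q υ) ∂(gaussianN I)) + ∫ υ, hyperVar Rbar (q υ) ∂(gaussianN I)) *
        ∫ υ, hyperVar Rbar (q υ) ∂(gaussianN I) := by
  obtain ⟨⟨P, hP⟩, hzero, hexp⟩ := hnice.exists_hermiteCoeff_eq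
  set B := multiBox n d
  set S : (Fin n → ℕ) → (Fin n → ℕ) → ℝ := fun α β =>
    ∫ υ, hermiteCoeff (q υ) α * hermiteCoeff (q υ) β ∂(gaussianN I)
  set s : (Fin n → ℕ) → ℝ := fun α => S α α
  have hint : ∀ α β, Integrable (fun υ => hermiteCoeff (q υ) α * hermiteCoeff (q υ) β)
      (gaussianN I) := by
    intro α β
    simpa only [hP, ← map_mul] using integrable_eval_gaussianN (P α * P β)
  have hs : ∀ α, 0 ≤ s α := fun α => integral_nonneg fun υ => mul_self_nonneg _
  have hs0 : ∀ α ∉ B, s α = 0 := fun α hα => by simp [s, S, hzero _ α hα]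
  have hSB : ∀ α β, S α β ≠ 0 → α ∈ B ∧ β ∈ B := by
    intro α β h
    constructor <;>
    · by_contra hB
      exact h (by simp [S, hzero _ _ hB])
  have hS : ∀ α β, S α β ^ 2 ≤ s α * s β := fun α β =>
    sq_integral_mul_le (hint _ _) (hint _ _) (hint _ _)
  have hg : ∀ x, ∫ υ, (eval x (q υ)) ^ 2 ∂(gaussianN I) =
      ∑ p ∈ B ×ˢ B, S p.1 p.2 * (hermiteMv p.1 x * hermiteMv p.2 x) := by
    intro x
    have hx : ∀ υ, eval x (q υ) ^ 2 = ∑ p ∈ B ×ˢ B,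
        hermiteCoeff (q υ) p.1 * hermiteCoeff (q υ) p.2 * (hermiteMv p.1 x * hermiteMv p.2 x) := by
      intro υ
      rw [hexp, sq, Finset.sum_mul_sum, Finset.sum_product]
      exact Finset.sum_congr rfl fun α _ => Finset.sum_congr rfl fun β _ => by ring
    simp only [hx]
    rw [integral_finsetSum _ fun p _ => (hint _ _).mul_const _]
    simp only [integral_mul_const, S]
  have hcoeff : ∀ γ, hermiteCoeffF (fun x => ∫ υ, (eval x (q υ)) ^ 2 ∂(gaussianN I)) γ =
      ∑ p ∈ B ×ˢ B, S p.1 p.2 * hermiteMvTriple p.1 p.2 γ := by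
    intro γ
    simp only [hermiteCoeffF, hg, Finset.sum_mul, mul_assoc (S _ _)]
    rw [integral_finsetSum _ fun p _ => (integrable_hermiteMv_mul_mul p.1 p.2 γ).const_mul _]
    simp only [integral_const_mul, hermiteMvTriple]
  have hnorm : ∫ υ, norm2sq (q υ) ∂(gaussianN I) = ∑ α ∈ B, s α := by
    simp only [norm2sq_of_eq_sum (hexp _), sq]
    rw [integral_finsetSum _ fun α _ => hint α α]
  have hvar : ∫ υ, hyperVar Rbar (q υ) ∂(gaussianN I) =
      ∑ α ∈ B, if 1 ≤ ∑ i, α i then Rbar ^ (2 * ∑ i, α i) * s α else 0 := by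
    simp only [hyperVar_of_hermiteCoeff_eq_zero (hzero _), sq]
    rw [integral_finsetSum _ fun α _ => by
      split_ifs
      · exact (hint α α).const_mul _
      · exact integrable_zero _ _ _]
    refine Finset.sum_congr rfl fun α _ => ?_
    split_ifs
    · rw [integral_const_mul]
    · simp
  have hR3 : 3 ≤ Rbar ^ 2 := (Real.sqrt_le_left (Real.sqrt_nonneg 3 |>.trans hR)).1 hR
  have hR1 : 1 ≤ Rbar := by
    have : 0 ≤ Rbar := (Real.sqrt_nonneg 3).trans hR
    nlinarith
  have hrR : 1 + 2 * (Rbar ^ ((1 : ℝ) / 4) / 13) ^ 2 ≤ Rbar ^ 2 := by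
    have h1 : Rbar ^ ((1 : ℝ) / 4) ≤ Rbar := by
      simpa using Real.rpow_le_rpow_of_exponent_le hR1 (by norm_num : (1 : ℝ) / 4 ≤ 1)
    have h2 : (Rbar ^ ((1 : ℝ) / 4)) ^ 2 ≤ Rbar ^ 2 :=
      pow_le_pow_left₀ (Real.rpow_nonneg (by linarith) _) h1 2
    rw [div_pow]
    linarith
  have hVnonneg : 0 ≤ ∑ α ∈ B, if 1 ≤ ∑ i, α i then Rbar ^ (2 * ∑ i, α i) * s α else 0 :=
    Finset.sum_nonneg fun α _ => by
      split_ifs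
      · exact mul_nonneg (by positivity) (hs α)
      · exact le_rfl
  have hNnonneg : 0 ≤ ∑ α ∈ B, s α := Finset.sum_nonneg fun α _ => hs α
  rw [hnorm, hvar, hyperVarF]
  refine Real.tsum_le_of_sum_le (fun γ => ?_) fun U => ?_
  · dsimp only [Pi.zero_apply]
    split_ifs
    · exact mul_nonneg (by rw [pow_mul]; positivity) (sq_nonneg _)
    · exact le_rfl
  · refine (sum_convolution_le hs hs0 (fun γ => ?_) hrR U).trans ?_
    · rw [hcoeff, sum_mul_hermiteMvTriple hSB]
      exact sq_convolution_le hs hS γ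
    · refine mul_le_mul_of_nonneg_right ?_ hVnonneg
      linarith
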